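/- Under the standing assumptions, assume further x ≤ 80. If q is a prime divisor of m, then q does not divide x₁ − y₁. -/

import Mathlib

/-! Dividing `x` and `y` by their gcd extracts powers of it from both quotients, so let `x` and `y`
be coprime, and write `B k = (x ^ k - y ^ k) / (x - y)`. The element `x / y` has order exactly `k`
in the unit group of `ZMod (B k)`: its `k`-th power is `1`, while `0 < x ^ d - y ^ d < B k` for
`0 < d < k`. Hence `k ∣ φ (B k)`. Now suppose that a prime `q` divides both `m` and `x - y`, but not
`n`. As `B k ≡ k * x ^ (k - 1)` modulo `q`, it divides `B m` but not `B n`. If `q ^ j ∣ c`, then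
`φ (c * B m)` is divisible by `φ (q ^ j * B m) = q ^ j * φ (B m)`, hence by `q ^ (j + 1)`. So
`φ (c * B m)` has a higher `q`-adic valuation than `c`, hence than `e * B n` for every divisor `e`
of `c`, and it cannot divide the latter. -/

open Nat Finset

section Totient

theorem totient_mul_of_dvd {d n : ℕ} (h : d ∣ n) : φ (d * n) = d * φ n := by
  rcases d.eq_zero_or_pos with rfl | hd
  · simp
  have hgcd := totient_gcd_mul_totient_mul d n
  rw [Nat.gcd_eq_left h, mul_assoc, mul_comm (φ n)] at hgcd
  exact Nat.eq_of_mul_eq_mul_left (totient_pos.2 hd) hgcd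

theorem totient_pow_mul_of_dvd {d n : ℕ} (h : d ∣ n) (k : ℕ) : φ (d ^ k * n) = d ^ k * φ n := by
  induction k with
  | zero => simp
  | succ k ih => rw [pow_succ', mul_assoc, totient_mul_of_dvd (h.mul_left _), ih, mul_assoc]

theorem pow_succ_dvd_totient_mul {d n c k : ℕ} (hn : d ∣ n) (hφ : d ∣ φ n) (hc : d ^ k ∣ c) :
    d ^ (k + 1) ∣ φ (c * n) :=
  calc d ^ (k + 1) ∣ d ^ k * φ n := mul_dvd_mul_left _ hφ
    _ = φ (d ^ k * n) := (totient_pow_mul_of_dvd hn k).symm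
    _ ∣ φ (c * n) := totient_dvd_of_dvd (mul_dvd_mul_right hc n)

theorem coprime_of_pow_modEq_pow {x y k N : ℕ} (hxy : x.Coprime y) (hk : k ≠ 0)
    (h : x ^ k ≡ y ^ k [MOD N]) : x.Coprime N := by
  have hdvd : x.gcd N ∣ y ^ k :=
    ((h.of_dvd (x.gcd_dvd_right N)).dvd_iff dvd_rfl).1 (dvd_pow (x.gcd_dvd_left N) hk)
  exact ((hxy.pow_right k).coprime_dvd_left (x.gcd_dvd_left N)).eq_one_of_dvd hdvd

theorem dvd_totient_of_pow_modEq_pow {x y k N : ℕ} (hxy : x.Coprime y) (hk : 0 < k)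
    (h : x ^ k ≡ y ^ k [MOD N]) (hmin : ∀ d, d < k → 0 < d → ¬ x ^ d ≡ y ^ d [MOD N]) :
    k ∣ φ N := by
  let u := ZMod.unitOfCoprime x (coprime_of_pow_modEq_pow hxy hk.ne' h)
  let v := ZMod.unitOfCoprime y (coprime_of_pow_modEq_pow hxy.symm hk.ne' h.symm)
  have pow_eq_one_iff (d : ℕ) : (u / v) ^ d = 1 ↔ x ^ d ≡ y ^ d [MOD N] := by
    rw [div_pow, div_eq_one, Units.ext_iff, ← ZMod.natCast_eq_natCast_iff]
    simp [u, v]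
  have order_eq : orderOf (u / v) = k :=
    (orderOf_eq_iff hk).2
      ⟨(pow_eq_one_iff k).2 h, fun d hdk hd => (pow_eq_one_iff d).not.2 (hmin d hdk hd)⟩
  rw [← order_eq]
  exact orderOf_dvd_of_pow_eq_one (ZMod.pow_totient _)

end Totient

/-- The homogeneous geometric sum `x ^ (n - 1) + x ^ (n - 2) * y + ⋯ + y ^ (n - 1)`, which stands
for the quotient `(x ^ n - y ^ n) / (x - y)` without subtraction or division. -/
def geomSum₂ {R : Type*} [Semiring R] (x y : R) (n : ℕ) : R :=
  ∑ i ∈ range n, x ^ i * y ^ (n - 1 - i)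

theorem geomSum₂_mul_mul {R : Type*} [CommSemiring R] (d x y : R) (n : ℕ) :
    geomSum₂ (d * x) (d * y) n = d ^ (n - 1) * geomSum₂ x y n := by
  rw [geomSum₂, geomSum₂, mul_sum]
  refine sum_congr rfl fun i hi => ?_
  have hsplit : d ^ (n - 1) = d ^ i * d ^ (n - 1 - i) := by
    rw [← pow_add, Nat.add_sub_cancel' (Nat.le_sub_one_of_lt (mem_range.1 hi))]
  rw [hsplit, mul_pow, mul_pow, mul_mul_mul_comm]

section NatGeomSum

variable {x y k q : ℕ}

theorem pow_sub_pow_div_sub_eq_geomSum₂ (hyx : y < x) (k : ℕ) :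
    (x ^ k - y ^ k) / (x - y) = geomSum₂ x y k := by
  rw [← geom_sum₂_mul_of_ge hyx.le, Nat.mul_div_cancel _ (Nat.sub_pos_of_lt hyx), geomSum₂]

theorem geomSum₂_modEq (h : x ≡ y [MOD q]) (k : ℕ) :
    geomSum₂ x y k ≡ k * x ^ (k - 1) [MOD q] := by
  rw [← ZMod.natCast_eq_natCast_iff] at h ⊢
  simp [geomSum₂, ← h, geom_sum₂_self]

theorem dvd_geomSum₂_iff_dvd (hxy : x.Coprime y) (h : x ≡ y [MOD q]) :
    q ∣ geomSum₂ x y k ↔ q ∣ k := by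
  have hxq : x.Coprime q := coprime_of_pow_modEq_pow hxy one_ne_zero (h.pow 1)
  rw [(geomSum₂_modEq h k).dvd_iff dvd_rfl, (hxq.symm.pow_right (k - 1)).dvd_mul_right]

theorem pow_modEq_pow_geomSum₂ (hyx : y ≤ x) (k : ℕ) : x ^ k ≡ y ^ k [MOD geomSum₂ x y k] := by
  refine ((Nat.modEq_iff_dvd' (Nat.pow_le_pow_left hyx k)).2 ?_).symm
  rw [← geom_sum₂_mul_of_ge hyx]
  exact dvd_mul_right _ _

theorem pow_pred_le_geomSum₂ (hk : 0 < k) : x ^ (k - 1) ≤ geomSum₂ x y k :=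
  calc x ^ (k - 1) = x ^ (k - 1) * y ^ (k - 1 - (k - 1)) := by simp
    _ ≤ geomSum₂ x y k := single_le_sum (f := fun i => x ^ i * y ^ (k - 1 - i))
        (fun _ _ => Nat.zero_le _) (mem_range.2 (Nat.sub_one_lt_of_lt hk))

theorem not_pow_modEq_pow_geomSum₂ {d : ℕ} (hy : 0 < y) (hyx : y < x) (hd : 0 < d) (hdk : d < k) :
    ¬ x ^ d ≡ y ^ d [MOD geomSum₂ x y k] := by
  intro h
  have hpow : y ^ d < x ^ d := Nat.pow_lt_pow_left hyx hd.ne'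
  have hlt : x ^ d - y ^ d < geomSum₂ x y k :=
    calc x ^ d - y ^ d < x ^ d := Nat.sub_lt (Nat.zero_lt_of_lt hpow) (Nat.pow_pos hy)
      _ ≤ x ^ (k - 1) := Nat.pow_le_pow_right (Nat.zero_lt_of_lt hyx) (Nat.le_sub_one_of_lt hdk)
      _ ≤ geomSum₂ x y k := pow_pred_le_geomSum₂ (hd.trans hdk)
  exact Nat.not_dvd_of_pos_of_lt (Nat.sub_pos_of_lt hpow) hlt
    ((Nat.modEq_iff_dvd' hpow.le).1 h.symm)

theorem dvd_totient_geomSum₂ (hy : 0 < y) (hyx : y < x) (hxy : x.Coprime y) (k : ℕ) :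
    k ∣ φ (geomSum₂ x y k) := by
  rcases k.eq_zero_or_pos with rfl | hk
  · simp [geomSum₂]
  exact dvd_totient_of_pow_modEq_pow hxy hk (pow_modEq_pow_geomSum₂ hyx.le k)
    fun _ hdk hd => not_pow_modEq_pow_geomSum₂ hy hyx hd hdk

theorem not_dvd_sub_of_totient_mul_geomSum₂_dvd {m n c e : ℕ} (hy : 0 < y) (hyx : y < x)
    (hxy : x.Coprime y) (hq : q.Prime) (hqm : q ∣ m) (hqn : ¬ q ∣ n) (hc : c ≠ 0) (hec : e ∣ c)
    (h : φ (c * geomSum₂ x y m) ∣ e * geomSum₂ x y n) : ¬ q ∣ x - y := by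
  intro hqxy
  have hmod : x ≡ y [MOD q] := ((Nat.modEq_iff_dvd' hyx.le).2 hqxy).symm
  have hdvd : q ^ (c.factorization q + 1) ∣ e * geomSum₂ x y n :=
    (pow_succ_dvd_totient_mul ((dvd_geomSum₂_iff_dvd hxy hmod).2 hqm)
      (hqm.trans (dvd_totient_geomSum₂ hy hyx hxy m)) (Nat.ordProj_dvd c q)).trans h
  have hcop : (q ^ (c.factorization q + 1)).Coprime (geomSum₂ x y n) :=
    (hq.coprime_iff_not_dvd.2 ((dvd_geomSum₂_iff_dvd hxy hmod).not.2 hqn)).pow_left _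
  exact Nat.pow_succ_factorization_not_dvd hc hq ((hcop.dvd_of_dvd_mul_right hdvd).trans hec)

end NatGeomSum

theorem prime_dvd_m_not_dvd_sub_general {x y z m n : ℕ} (hy : 0 < y) (hz : 0 < z) (hyx : y < x)
    (hnm : n ≤ m)
    (hdvd : φ (z * ((x ^ m - y ^ m) / (x - y))) ∣ z * ((x ^ n - y ^ n) / (x - y)))
    {d₁ x₁ y₁ : ℕ} (hd₁ : d₁ = Nat.gcd x y) (hx₁ : x₁ = x / d₁) (hy₁ : y₁ = y / d₁)
    {q : ℕ} (hq : q.Prime) (hqm : q ∣ m) (hqn : ¬ q ∣ n) :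
    ¬ q ∣ x₁ - y₁ := by
  have hd₁_pos : 0 < d₁ := hd₁ ▸ Nat.gcd_pos_of_pos_right x hy
  have hx : x = d₁ * x₁ := by rw [hx₁, Nat.mul_div_cancel' (hd₁ ▸ Nat.gcd_dvd_left x y)]
  have hy' : y = d₁ * y₁ := by rw [hy₁, Nat.mul_div_cancel' (hd₁ ▸ Nat.gcd_dvd_right x y)]
  have hcop : x₁.Coprime y₁ := by
    rw [hx₁, hy₁, hd₁]
    exact Nat.coprime_div_gcd_div_gcd (hd₁ ▸ hd₁_pos)
  rw [pow_sub_pow_div_sub_eq_geomSum₂ hyx, pow_sub_pow_div_sub_eq_geomSum₂ hyx, hx, hy',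
    geomSum₂_mul_mul, geomSum₂_mul_mul, ← mul_assoc, ← mul_assoc] at hdvd
  exact not_dvd_sub_of_totient_mul_geomSum₂_dvd (Nat.pos_of_mul_pos_left (hy' ▸ hy))
    (Nat.lt_of_mul_lt_mul_left (hx ▸ hy' ▸ hyx)) hcop hq hqm hqn (by positivity)
    (mul_dvd_mul_left z (pow_dvd_pow d₁ (Nat.sub_le_sub_right hnm 1))) hdvd

theorem prime_dvd_m_not_dvd_sub (x y z m n : ℕ) (hx : 0 < x) (hy : 0 < y) (hz : 0 < z)
    (hm : 0 < m) (hn : 0 < n) (hxy : y < x) (hzxy : z ≤ x - y)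
    (hgcd : Nat.gcd m n = 1) (hmn : n < m)
    (heq : Nat.totient (z * ((x ^ m - y ^ m) / (x - y))) =
      z * ((x ^ n - y ^ n) / (x - y)))
    (hx80 : x ≤ 80)
    (d₁ x₁ y₁ : ℕ) (hd₁ : d₁ = Nat.gcd x y) (hx₁ : x₁ = x / d₁) (hy₁ : y₁ = y / d₁)
    (q : ℕ) (hq : q.Prime) (hqm : q ∣ m) :
    ¬ q ∣ x₁ - y₁ :=
  prime_dvd_m_not_dvd_sub_general hy hz hxy hmn.le heq.dvd hd₁ hx₁ hy₁ hq hqm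
    (hq.coprime_iff_not_dvd.1 (Nat.Coprime.coprime_dvd_left hqm hgcd))
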